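/- arXiv:2308.01114 — 2 statements merged into one kernel-verified Lean document; each statement's English description precedes it below -/
import Mathlib

section
/- Let G' = {p ∈ (OnePoint ℂ) × (OnePoint ℂ) : p.1 ≠ p.2} be the complement of the diagonal in the square of the Riemann sphere, equipped with the subspace topology. Then G' is not homeomorphic to ℂ × ℂ. (This is the topological content of Theorem 3.2(b) of the paper: G is not biholomorphic to ℂ².) -/
open Topology Filter Complex ComplexConjugate

lemma aux_log (f : ℂ → ℂ) (hf : Continuous f) (h0 : ∀ z, f z ≠ 0) :
    ∃ g : ℂ → ℂ, Continuous g ∧ ∀ z, exp (g z) = f z := by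
  obtain ⟨F, ⟨-, hF⟩, -⟩ := Complex.isCoveringMapOn_exp.existsUnique_continuousMap_lifts
    (⟨f, hf⟩ : C(ℂ, ℂ)) (a₀ := 0) (e₀ := Complex.log (f 0)) (by simp [exp_log (h0 0)])
    (fun a => by simpa using h0 a)
  exact ⟨F, F.continuous, fun z => congrFun hF z⟩

lemma aux_wind (f₁ f₂ : ℂ → ℂ) (h₁ : Continuous f₁) (h₂ : Continuous f₂)
    (n₁ : ∀ z, f₁ z ≠ 0) (n₂ : ∀ z, f₂ z ≠ 0)
    (h : ∀ z, ‖z‖ = 1 → f₂ (conj z) = z * f₁ z) : False := by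
  obtain ⟨g₁, c₁, e₁⟩ := aux_log f₁ h₁ n₁
  obtain ⟨g₂, c₂, e₂⟩ := aux_log f₂ h₂ n₂
  let φ : ℝ → ℂ := fun θ =>
    (g₂ (conj (exp (θ * I))) - g₁ (exp (θ * I)) - θ * I) / (2 * Real.pi * I)
  have hpi : (2 * Real.pi * I : ℂ) ≠ 0 := by simp [Real.pi_ne_zero]
  have hφ : Continuous φ := by
    have : Continuous (fun θ : ℝ => conj (exp (θ * I))) :=
      Complex.continuous_conj.comp (by fun_prop)
    exact (((c₂.comp this).sub (c₁.comp (by fun_prop))).sub (by fun_prop)).div_const _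
  have hint : ∀ θ, ∃ n : ℤ, φ θ = n := by
    intro θ
    have := h (exp (θ * I)) (Complex.norm_exp_ofReal_mul_I θ)
    rw [← e₂, ← e₁, ← Complex.exp_add, Complex.exp_eq_exp_iff_exists_int] at this
    obtain ⟨n, hn⟩ := this
    refine ⟨n, ?_⟩
    simp only [φ]
    rw [hn]
    field_simp
    ring
  have hper : φ (2 * Real.pi) = φ 0 - 1 := by
    simp only [φ]
    have : exp (((2 * Real.pi : ℝ) : ℂ) * I) = 1 := by
      push_cast; exact Complex.exp_two_pi_mul_I
    rw [this]
    have h2 : (Real.pi : ℂ) ≠ 0 := by simp [Real.pi_ne_zero]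
    have h3 := Complex.I_ne_zero
    simp
    field_simp
  obtain ⟨n, hn⟩ := hint 0
  have hc : Continuous (fun θ => (φ θ).re) := Complex.continuous_re.comp hφ
  have := intermediate_value_uIcc (a := 0) (b := 2 * Real.pi) hc.continuousOn
  have hm : (n : ℝ) - 1 / 2 ∈ Set.uIcc (φ 0).re (φ (2 * Real.pi)).re := by
    rw [hper, hn, Set.uIcc_of_ge] <;> simp
    linarith
  obtain ⟨θ, -, hθ⟩ := this hm
  obtain ⟨k, hk⟩ := hint θ
  simp only [hk, Complex.intCast_re] at hθ
  have : (2 * k : ℝ) = 2 * n - 1 := by linarith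
  have : 2 * k = 2 * n - 1 := by exact_mod_cast this
  omega

lemma aux_lift {E V : Type*} [NormedAddCommGroup E] [NormedSpace ℝ E] [ProperSpace E]
    [NormedAddCommGroup V] [NormedSpace ℂ V] (Q : E → V →L[ℂ] V) (hQ : Continuous Q)
    (hQQ : ∀ w v, Q w (Q w v) = Q w v) (v₀ : V) (hv₀ : v₀ ≠ 0) (hv₀' : Q 0 v₀ = v₀) (R : ℝ) :
    ∃ v : E → V, ContinuousOn v (Metric.closedBall 0 R) ∧
      ∀ w ∈ Metric.closedBall (0 : E) R, v w ≠ 0 ∧ Q w (v w) = v w := by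
  have hu := (isCompact_closedBall (0 : E) R).uniformContinuousOn_of_continuous hQ.continuousOn
  obtain ⟨δ, hδ, hu⟩ := Metric.uniformContinuousOn_iff.1 hu 1 one_pos
  obtain ⟨n, hn⟩ := exists_nat_gt (R / δ)
  have key : ∀ i : ℕ, i ≤ n + 1 → ∃ v : E → V, ContinuousOn v (Metric.closedBall 0 R) ∧
      ∀ w ∈ Metric.closedBall (0 : E) R, v w ≠ 0 ∧
        Q (((i : ℝ) / (n + 1 : ℝ)) • w) (v w) = v w := by
    intro i
    induction i with
    | zero => exact fun _ => ⟨fun _ => v₀, continuousOn_const, fun w _ => by simp [hv₀, hv₀']⟩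
    | succ i ih =>
      intro hi
      obtain ⟨v, hc, hv⟩ := ih (by omega)
      refine ⟨fun w => Q ((((i + 1 : ℕ) : ℝ) / (n + 1 : ℝ)) • w) (v w), ?_, fun w hw => ⟨?_, ?_⟩⟩
      · exact (hQ.comp (by fun_prop)).continuousOn.clm_apply hc
      · obtain ⟨h1, h2⟩ := hv w hw
        have hmem : ∀ j : ℕ, j ≤ n + 1 → ((j : ℝ) / (n + 1 : ℝ)) • w ∈
            Metric.closedBall (0 : E) R := by
          intro j hj
          rw [mem_closedBall_zero_iff] at hw ⊢
          rw [norm_smul, Real.norm_of_nonneg (by positivity)]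
          have : (j : ℝ) / (n + 1 : ℝ) ≤ 1 := by
            rw [div_le_one (by positivity)]; exact_mod_cast hj
          nlinarith [norm_nonneg w]
        have hd := hu _ (hmem (i + 1) hi) _ (hmem i (by omega)) (by
          rw [dist_eq_norm, ← sub_smul, norm_smul]
          have : ((i + 1 : ℕ) : ℝ) / (n + 1 : ℝ) - (i : ℝ) / (n + 1 : ℝ) = 1 / (n + 1 : ℝ) := by
            push_cast; ring
          rw [this, Real.norm_of_nonneg (by positivity), one_div, inv_mul_lt_iff₀ (by positivity)]
          rw [mem_closedBall_zero_iff] at hw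
          rw [div_lt_iff₀ hδ] at hn
          nlinarith)
        rw [dist_eq_norm] at hd
        intro h0
        simp only at h0
        have hle := (Q ((((i + 1 : ℕ) : ℝ) / (n + 1 : ℝ)) • w) -
          Q (((i : ℝ) / (n + 1 : ℝ)) • w)).le_opNorm (v w)
        rw [sub_apply, h0, h2, zero_sub, norm_neg] at hle
        have := norm_pos_iff.2 h1
        nlinarith
      · exact hQQ _ _
  obtain ⟨v, hc, hv⟩ := key (n + 1) le_rfl
  refine ⟨v, hc, fun w hw => ?_⟩
  have := hv w hw
  push_cast at this
  rwa [div_self (by positivity), one_smul] at this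

/-- coefficients of the projection onto the tautological line -/
noncomputable def auxC : OnePoint ℂ → ℂ × ℂ := fun w =>
  w.elim (1, 0) (fun z => (((‖z‖ ^ 2 / (1 + ‖z‖ ^ 2) : ℝ) : ℂ), z / ((1 + ‖z‖ ^ 2 : ℝ) : ℂ)))

lemma auxC_cont : Continuous auxC := by
  rw [OnePoint.continuous_iff]
  constructor
  · rw [coclosedCompact_eq_cocompact]
    have hn : Tendsto (fun z : ℂ => 1 + ‖z‖ ^ 2) (cocompact ℂ) atTop :=
      tendsto_atTop_add_const_left _ _
        ((tendsto_pow_atTop two_ne_zero).comp (tendsto_norm_cocompact_atTop (E := ℂ)))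
    refine Tendsto.prodMk_nhds ?_ ?_
    · have : Tendsto (fun z : ℂ => (((1 - (1 + ‖z‖ ^ 2)⁻¹ : ℝ)) : ℂ)) (cocompact ℂ) (𝓝 ((1 - 0 : ℝ) : ℂ)) :=
        (Complex.continuous_ofReal.tendsto _).comp (tendsto_const_nhds.sub hn.inv_tendsto_atTop)
      convert this using 2 with z
      · congr 1
        have : (1 + ‖z‖ ^ 2) ≠ 0 := by positivity
        field_simp
        ring
      · simp
    · rw [tendsto_zero_iff_norm_tendsto_zero]
      have h2 := (tendsto_norm_cocompact_atTop (E := ℂ)).inv_tendsto_atTop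
      refine squeeze_zero (fun _ => norm_nonneg _) (fun z => ?_) h2
      rw [norm_div, Complex.norm_real, Real.norm_of_nonneg (by positivity)]
      simp only [Pi.inv_apply]
      rcases eq_or_ne z 0 with rfl | hz
      · simp
      · have := norm_pos_iff.2 hz
        rw [div_le_iff₀ (by positivity)]
        field_simp
        nlinarith
  · have : ∀ z : ℂ, (1 + ‖z‖ ^ 2 : ℝ) ≠ 0 := fun z => by positivity
    have h' : ∀ z : ℂ, ((1 + ‖z‖ ^ 2 : ℝ) : ℂ) ≠ 0 := fun z => by exact_mod_cast this z
    refine Continuous.prodMk ?_ ?_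
    · exact Complex.continuous_ofReal.comp (Continuous.div (by fun_prop) (by fun_prop) this)
    · exact Continuous.div (by fun_prop) (by fun_prop) h'

open ContinuousLinearMap in
/-- projection onto the tautological line -/
noncomputable def auxP (w : OnePoint ℂ) : (ℂ × ℂ) →L[ℂ] (ℂ × ℂ) :=
  (auxC w).1 • ((inl ℂ ℂ ℂ).comp (fst ℂ ℂ ℂ)) + (auxC w).2 • ((inl ℂ ℂ ℂ).comp (snd ℂ ℂ ℂ)) +
  (conj (auxC w).2) • ((inr ℂ ℂ ℂ).comp (fst ℂ ℂ ℂ)) +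
  (1 - (auxC w).1) • ((inr ℂ ℂ ℂ).comp (snd ℂ ℂ ℂ))

lemma auxP_cont : Continuous auxP := by
  have h1 := continuous_fst.comp auxC_cont
  have h2 := continuous_snd.comp auxC_cont
  have h3 := Complex.continuous_conj.comp h2
  exact (((h1.smul continuous_const).add (h2.smul continuous_const)).add
    (h3.smul continuous_const)).add ((continuous_const.sub h1).smul continuous_const)

lemma auxP_infty (v : ℂ × ℂ) : auxP OnePoint.infty v = (v.1, 0) := by
  ext <;> simp [auxP, auxC]

lemma auxP_coe (z : ℂ) (v : ℂ × ℂ) : auxP (z : OnePoint ℂ) v =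
    (z * ((conj z * v.1 + v.2) / (1 + z * conj z)), (conj z * v.1 + v.2) / (1 + z * conj z)) := by
  have : (1 + z * conj z) ≠ 0 := by
    rw [Complex.mul_conj']
    have : (1 + ‖z‖ ^ 2 : ℝ) ≠ 0 := by positivity
    exact_mod_cast this
  ext <;> simp [auxP, auxC, ← Complex.mul_conj'] <;> generalize conj z = c at * <;>
    have h2 : 1 + c * z ≠ 0 := by rwa [mul_comm]
  all_goals grind

lemma auxP_idem (w : OnePoint ℂ) (v : ℂ × ℂ) : auxP w (auxP w v) = auxP w v := by
  induction w using OnePoint.rec with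
  | infty => simp [auxP_infty]
  | coe z =>
    have : (1 + z * conj z) ≠ 0 := by
      rw [Complex.mul_conj']
      have : (1 + ‖z‖ ^ 2 : ℝ) ≠ 0 := by positivity
      exact_mod_cast this
    simp only [auxP_coe]
    generalize conj z = c at *
    ext <;> simp <;> grind

lemma auxP_ex (w : OnePoint ℂ) : ∃ v, v ≠ 0 ∧ auxP w v = v := by
  induction w using OnePoint.rec with
  | infty => exact ⟨(1, 0), by simp, by simp [auxP_infty]⟩
  | coe z =>
    have : (1 + z * conj z) ≠ 0 := by
      rw [Complex.mul_conj']
      have : (1 + ‖z‖ ^ 2 : ℝ) ≠ 0 := by positivity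
      exact_mod_cast this
    refine ⟨(z, 1), by simp, ?_⟩
    simp only [auxP_coe]
    generalize conj z = c at *
    ext <;> simp <;> grind

open Classical in
/-- the quotient map to the sphere -/
noncomputable def auxQ (p : ℂ × ℂ) : OnePoint ℂ :=
  if p.2 = 0 then OnePoint.infty else ((p.1 / p.2 : ℂ) : OnePoint ℂ)

lemma auxQ_cont : ContinuousOn auxQ {0}ᶜ := by
  intro p hp
  apply ContinuousAt.continuousWithinAt
  by_cases h : p.2 = 0
  · have hp1 : p.1 ≠ 0 := fun h1 => hp (by ext <;> simp [h, h1])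
    rw [ContinuousAt, show auxQ p = OnePoint.infty by simp [auxQ, h]]
    rw [← tendsto_inf_principal_nhds_iff_of_forall_eq (s := {q : ℂ × ℂ | q.2 ≠ 0})
      (by intro q hq; simp at hq; simp [auxQ, hq])]
    have h1 : Tendsto (fun q : ℂ × ℂ => q.1 / q.2) (𝓝 p ⊓ 𝓟 {q : ℂ × ℂ | q.2 ≠ 0})
        (cocompact ℂ) := by
      rw [← Metric.cobounded_eq_cocompact, ← tendsto_norm_atTop_iff_cobounded]
      simp only [div_eq_mul_inv, norm_mul, norm_inv]
      refine Tendsto.pos_mul_atTop (norm_pos_iff.2 hp1)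
        ((continuous_fst.norm.tendsto p).mono_left inf_le_left) ?_
      refine tendsto_inv_nhdsGT_zero.comp ?_
      rw [tendsto_nhdsWithin_iff]
      constructor
      · have := (continuous_snd (X := ℂ) (Y := ℂ)).norm.tendsto p
        rw [h, norm_zero] at this
        exact this.mono_left inf_le_left
      · filter_upwards [mem_inf_of_right (mem_principal_self _)] with q hq
        exact norm_pos_iff.2 hq
    have h2 : Tendsto (fun q : ℂ × ℂ => ((q.1 / q.2 : ℂ) : OnePoint ℂ))
        (𝓝 p ⊓ 𝓟 {q : ℂ × ℂ | q.2 ≠ 0}) (𝓝 OnePoint.infty) := by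
      rw [← coclosedCompact_eq_cocompact] at h1
      exact OnePoint.tendsto_coe_infty.comp h1
    refine h2.congr' ?_
    filter_upwards [mem_inf_of_right (mem_principal_self _)] with q hq
    simp at hq
    simp [auxQ, hq]
  · have : ContinuousAt (fun q : ℂ × ℂ => ((q.1 / q.2 : ℂ) : OnePoint ℂ)) p :=
      OnePoint.continuous_coe.continuousAt.comp
        (continuousAt_fst.div continuousAt_snd h)
    refine this.congr ?_
    filter_upwards [(continuous_snd.isOpen_preimage _ isOpen_compl_singleton).mem_nhds
      (show p ∈ Prod.snd ⁻¹' ({0}ᶜ : Set ℂ) from h)] with q hq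
    simp at hq
    simp [auxQ, hq]

lemma auxQ_smul (c a b : ℂ) (hc : c ≠ 0) : auxQ (c * a, c * b) = auxQ (a, b) := by
  by_cases h : b = 0
  · simp [auxQ, h]
  · simp [auxQ, h, hc, mul_div_mul_left]

lemma auxQ_ne (a b : ℂ) (h : (a, b) ≠ 0) : auxQ (a, b) ≠ auxQ (-conj b, conj a) := by
  by_cases hb : b = 0
  · have : a ≠ 0 := fun ha => h (by simp [ha, hb])
    simp [auxQ, hb, this]
  · by_cases ha : a = 0
    · simp [auxQ, hb, ha]
    · simp only [auxQ, hb, ha, if_false, map_eq_zero, ne_eq, OnePoint.coe_eq_coe]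
      rw [div_eq_div_iff hb (by simpa using ha)]
      intro h'
      have h2 : a * conj a + b * conj b = 0 := by rw [h']; ring
      rw [Complex.mul_conj', Complex.mul_conj'] at h2
      have h3 : (‖a‖ ^ 2 + ‖b‖ ^ 2 : ℝ) = 0 := by exact_mod_cast h2
      have := norm_pos_iff.2 ha
      have := norm_nonneg b
      nlinarith

/-- the embedded sphere -/
noncomputable def auxPhi (p : {p : ℂ × ℂ // p ≠ 0}) :
    {p : OnePoint ℂ × OnePoint ℂ // p.1 ≠ p.2} :=
  ⟨(auxQ p.1, auxQ (-conj p.1.2, conj p.1.1)), auxQ_ne p.1.1 p.1.2 p.2⟩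

lemma auxPhi_cont : Continuous auxPhi := by
  refine Continuous.subtype_mk (Continuous.prodMk ?_ ?_) _
  · exact auxQ_cont.comp_continuous continuous_subtype_val (fun p => p.2)
  · refine auxQ_cont.comp_continuous ?_ (fun p => ?_)
    · exact ((Complex.continuous_conj.comp (continuous_snd.comp continuous_subtype_val)).neg).prodMk
        (Complex.continuous_conj.comp (continuous_fst.comp continuous_subtype_val))
    · intro h
      apply p.2
      simp only [Set.mem_singleton_iff, Prod.mk_eq_zero, neg_eq_zero, map_eq_zero] at h
      exact Prod.ext h.2 h.1

lemma auxPhi_smul (c : ℂ) (hc : c ≠ 0) (p q : {p : ℂ × ℂ // p ≠ 0})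
    (h : q.1 = (c * p.1.1, c * p.1.2)) : auxPhi q = auxPhi p := by
  apply Subtype.ext
  simp only [auxPhi, h]
  rw [auxQ_smul c _ _ hc, map_mul, map_mul, ← mul_neg, auxQ_smul _ _ _ (by simpa using hc)]

lemma auxPhi_bdd (h : {p : OnePoint ℂ × OnePoint ℂ // p.1 ≠ p.2} ≃ₜ (ℂ × ℂ)) :
    ∃ R, ∀ p, h (auxPhi p) ∈ Metric.closedBall 0 R := by
  let i : Metric.sphere (0 : ℂ × ℂ) 1 → {p : ℂ × ℂ // p ≠ 0} :=
    fun s => ⟨s.1, ne_zero_of_mem_unit_sphere s⟩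
  have hi : Continuous i := continuous_subtype_val.subtype_mk _
  have hK : IsCompact (Set.range (fun s => h (auxPhi (i s)))) :=
    isCompact_range (h.continuous.comp (auxPhi_cont.comp hi))
  obtain ⟨R, hR⟩ := hK.isBounded.subset_closedBall 0
  refine ⟨R, fun p => hR ?_⟩
  have hp := norm_pos_iff.2 p.2
  have hc : ((‖p.1‖⁻¹ : ℝ) : ℂ) ≠ 0 := by
    exact_mod_cast (inv_pos.2 hp).ne'
  refine ⟨⟨((‖p.1‖⁻¹ : ℝ) : ℂ) • p.1, ?_⟩, ?_⟩
  · rw [mem_sphere_zero_iff_norm, norm_smul, Complex.norm_real, norm_inv, norm_norm,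
      inv_mul_cancel₀ hp.ne']
  · exact congrArg h (auxPhi_smul _ hc p _ rfl)

/-- The complement of the diagonal in the square of the Riemann sphere
is not homeomorphic to `ℂ × ℂ`. -/
theorem confSphere_not_homeomorphic_to_C2 :
    IsEmpty ({p : OnePoint ℂ × OnePoint ℂ // p.1 ≠ p.2} ≃ₜ (ℂ × ℂ)) := by
  refine ⟨fun h => ?_⟩
  obtain ⟨R, hR⟩ := auxPhi_bdd h
  let Q : ℂ × ℂ → (ℂ × ℂ) →L[ℂ] (ℂ × ℂ) := fun w => auxP (h.symm w).1.1
  have hQ : Continuous Q := auxP_cont.comp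
    (continuous_fst.comp (continuous_subtype_val.comp h.symm.continuous))
  obtain ⟨v₀, hv₀, hv₀'⟩ := auxP_ex (h.symm 0).1.1
  obtain ⟨v, hvc, hv⟩ := aux_lift Q hQ (fun w v => auxP_idem _ v) v₀ hv₀ hv₀' R
  let s : {p : ℂ × ℂ // p ≠ 0} → ℂ × ℂ := fun p => v (h (auxPhi p))
  have hs : Continuous s := hvc.comp_continuous (h.continuous.comp auxPhi_cont) hR
  have hs0 : ∀ p, s p ≠ 0 := fun p => (hv _ (hR p)).1
  have hsP : ∀ p, auxP (auxQ p.1) (s p) = s p := fun p => by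
    have := (hv _ (hR p)).2
    simp only [Q, Homeomorph.symm_apply_apply] at this
    exact this
  have hcoe : ∀ (z : ℂ) (u : ℂ × ℂ), auxP z u = u → u.1 = z * u.2 := by
    intro z u hu
    rw [auxP_coe] at hu
    rw [← hu]
  let i₁ : ℂ → {p : ℂ × ℂ // p ≠ 0} := fun z => ⟨(z, 1), by simp⟩
  let i₂ : ℂ → {p : ℂ × ℂ // p ≠ 0} := fun z => ⟨(1, z), by simp⟩
  have ci₁ : Continuous i₁ := Continuous.subtype_mk (by fun_prop) _
  have ci₂ : Continuous i₂ := Continuous.subtype_mk (by fun_prop) _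
  have r₁ : ∀ z, (s (i₁ z)).1 = z * (s (i₁ z)).2 := fun z => by
    have := hsP (i₁ z)
    apply hcoe
    simpa [auxQ, i₁] using this
  refine aux_wind (fun z => (s (i₁ z)).2) (fun z => (s (i₂ z)).1)
    (continuous_snd.comp (hs.comp ci₁)) (continuous_fst.comp (hs.comp ci₂)) ?_ ?_ ?_
  · intro z hz
    exact hs0 (i₁ z) (Prod.ext (by rw [r₁, hz]; simp) hz)
  · intro z hz
    apply hs0 (i₂ z)
    refine Prod.ext hz ?_
    have := hsP (i₂ z)
    by_cases h0 : z = 0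
    · have h2 : auxQ (i₂ z).1 = OnePoint.infty := by simp [auxQ, i₂, h0]
      rw [h2, auxP_infty] at this
      rw [← this]; rfl
    · have h2 : auxQ (i₂ z).1 = ((1 / z : ℂ) : OnePoint ℂ) := by simp [auxQ, i₂, h0]
      rw [h2] at this
      have h3 := hcoe _ _ this
      rw [hz] at h3
      simpa [h0] using h3
  · intro z hz
    have hz0 : z ≠ 0 := by rintro rfl; simp at hz
    have hm : z * conj z = 1 := by rw [Complex.mul_conj', hz]; simp
    have : auxPhi (i₁ z) = auxPhi (i₂ (conj z)) :=
      auxPhi_smul z hz0 _ _ (by simp [i₁, i₂, hm])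
    have e : s (i₂ (conj z)) = s (i₁ z) := by simp only [s, this]
    simp only [e, r₁]
end

section
/- Theorem 4.3 (holomorphic functions on G invariant under the cyclic parabolic group): Let F : ℂ × ℂ → ℂ define a holomorphic function on G. Then F(z + 1, w + 1) = F(z, w) holds for all z, w ∈ ℂ with z ≠ w if and only if there exists an entire function g : ℂ → ℂ such that F(z, w) = g(1/(z − w)) for all z, w ∈ ℂ with z ≠ w. -/
/-- `F : ℂ × ℂ → ℂ` defines a holomorphic function on
`G = Ĉ² \ diagonal`, expressed in the standard affine charts. -/
def DefinesHolomorphicOnG (F : ℂ × ℂ → ℂ) : Prop :=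
  DifferentiableOn ℂ F {p : ℂ × ℂ | p.1 ≠ p.2} ∧
  (∃ F₂ : ℂ × ℂ → ℂ, DifferentiableOn ℂ F₂ {p : ℂ × ℂ | p.1 * p.2 ≠ 1} ∧
    ∀ z v : ℂ, v ≠ 0 → z * v ≠ 1 → F₂ (z, v) = F (z, 1 / v)) ∧
  (∃ F₃ : ℂ × ℂ → ℂ, DifferentiableOn ℂ F₃ {p : ℂ × ℂ | p.1 * p.2 ≠ 1} ∧
    ∀ u w : ℂ, u ≠ 0 → u * w ≠ 1 → F₃ (u, w) = F (1 / u, w))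

lemma aux_doubly_periodic (f : ℂ → ℂ) (hf : Differentiable ℂ f) (τ : ℂ) (hτ : τ.im ≠ 0)
    (h1 : ∀ z, f (z + 1) = f z) (h2 : ∀ z, f (z + τ) = f z) (z w : ℂ) : f z = f w := by
  have p1 : Function.Periodic f 1 := h1
  have p2 : Function.Periodic f τ := h2
  apply hf.apply_eq_apply_of_bounded
  have hc : IsCompact (f '' Metric.closedBall 0 (1 + ‖τ‖)) :=
    (isCompact_closedBall _ _).image hf.continuous
  refine hc.isBounded.subset ?_
  rintro _ ⟨x, rfl⟩
  set b : ℝ := x.im / τ.im with hb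
  set a : ℝ := x.re - b * τ.re with ha
  have hx : x = a + b * τ := by
    apply Complex.ext
    · simp [ha]
    · simp [hb]; field_simp
  refine ⟨(Int.fract a : ℝ) + (Int.fract b : ℝ) * τ, ?_, ?_⟩
  · rw [mem_closedBall_zero_iff]
    refine (norm_add_le _ _).trans ?_
    rw [norm_mul, Complex.norm_real, Complex.norm_real, Real.norm_of_nonneg (Int.fract_nonneg _),
      Real.norm_of_nonneg (Int.fract_nonneg _)]
    have := (Int.fract_lt_one a).le
    have := mul_le_mul_of_nonneg_right (Int.fract_lt_one b).le (norm_nonneg τ)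
    linarith
  · have e : x = ((Int.fract a : ℝ) + (Int.fract b : ℝ) * τ + (⌊a⌋ : ℤ) * (1 : ℂ)) + (⌊b⌋ : ℤ) * τ := by
      rw [hx]
      simp only [Int.fract]
      push_cast
      ring
    conv_rhs => rw [e]
    rw [(p2.int_mul _) _, (p1.int_mul _) _]

lemma aux_entire (f : ℂ → ℂ) (h : ℂ → ℂ) (hf : ∀ t, t ≠ 0 → DifferentiableAt ℂ f t)
    (hh : DifferentiableAt ℂ h 0) (he : f =ᶠ[nhds 0] h) : Differentiable ℂ f := by
  intro t
  by_cases ht : t = 0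
  · subst ht
    exact hh.congr_of_eventuallyEq he
  · exact hf t ht

lemma aux_open : IsOpen {p : ℂ × ℂ | p.1 * p.2 ≠ 1} :=
  isOpen_ne_fun (by fun_prop) (by fun_prop)

lemma aux_open' : IsOpen {p : ℂ × ℂ | p.1 ≠ p.2} :=
  isOpen_ne_fun (by fun_prop) (by fun_prop)

lemma aux_main (F : ℂ × ℂ → ℂ) (hF : DefinesHolomorphicOnG F)
    (hinv : ∀ z w : ℂ, z ≠ w → F (z + 1, w + 1) = F (z, w)) :
    ∃ g : ℂ → ℂ, Differentiable ℂ g ∧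
      ∀ z w : ℂ, z ≠ w → F (z, w) = g (1 / (z - w)) := by
  obtain ⟨hF1, ⟨F₂, hF2, e2⟩, ⟨F₃, hF3, e3⟩⟩ := hF
  have dF : ∀ p : ℂ × ℂ, p.1 ≠ p.2 → DifferentiableAt ℂ F p := fun p hp =>
    hF1.differentiableAt (aux_open'.mem_nhds hp)
  have dF2 : ∀ p : ℂ × ℂ, p.1 * p.2 ≠ 1 → DifferentiableAt ℂ F₂ p := fun p hp =>
    hF2.differentiableAt (aux_open.mem_nhds hp)
  have dF3 : ∀ p : ℂ × ℂ, p.1 * p.2 ≠ 1 → DifferentiableAt ℂ F₃ p := fun p hp =>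
    hF3.differentiableAt (aux_open.mem_nhds hp)
  let G : ℂ → ℂ → ℂ := fun z t => if t = 0 then F₂ (z, 0) else F (z, z - t⁻¹)
  let H : ℂ → ℂ → ℂ := fun w t => if t = 0 then F₃ (0, w) else F (w + t⁻¹, w)
  have G0 : ∀ z t, t ≠ 0 → G z t = F (z, z - t⁻¹) := fun z t ht => by simp [G, ht]
  have H0 : ∀ z t, t ≠ 0 → H z t = F (z + t⁻¹, z) := fun z t ht => by simp [H, ht]
  have dG : ∀ z, Differentiable ℂ (G z) := by
    intro z
    apply aux_entire (G z) (fun t => F₂ (z, t / (z * t - 1)))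
    · intro t ht
      have h : DifferentiableAt ℂ (fun t : ℂ => F (z, z - t⁻¹)) t := by
        apply DifferentiableAt.comp (g := F) (f := fun t : ℂ => (z, z - t⁻¹))
        · apply dF
          intro h
          have : t⁻¹ = 0 := by linear_combination h
          exact ht (inv_eq_zero.mp this)
        · fun_prop (disch := assumption)
      refine h.congr_of_eventuallyEq ?_
      filter_upwards [isOpen_ne.mem_nhds ht] with s hs using G0 z s hs
    · apply DifferentiableAt.comp (g := F₂) (f := fun t : ℂ => (z, t / (z * t - 1)))
      · apply dF2; simp
      · have : z * 0 - 1 ≠ 0 := by simp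
        fun_prop (disch := assumption)
    · have : ∀ᶠ t in nhds (0 : ℂ), z * t - 1 ≠ 0 :=
        ContinuousAt.eventually_ne (by fun_prop) (by simp)
      filter_upwards [this] with t ht
      by_cases h0 : t = 0
      · simp [G, h0]
      · rw [G0 z t h0, e2]
        · congr 2; field_simp
        · exact div_ne_zero h0 ht
        · intro h
          field_simp at h
          have : (1 : ℂ) = 0 := by linear_combination h
          exact one_ne_zero this
  have dH : ∀ z, Differentiable ℂ (H z) := by
    intro z
    apply aux_entire (H z) (fun t => F₃ (t / (z * t + 1), z))
    · intro t ht
      have h : DifferentiableAt ℂ (fun t : ℂ => F (z + t⁻¹, z)) t := by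
        apply DifferentiableAt.comp (g := F) (f := fun t : ℂ => (z + t⁻¹, z))
        · apply dF
          intro h
          have : t⁻¹ = 0 := by linear_combination h
          exact ht (inv_eq_zero.mp this)
        · fun_prop (disch := assumption)
      refine h.congr_of_eventuallyEq ?_
      filter_upwards [isOpen_ne.mem_nhds ht] with s hs using H0 z s hs
    · apply DifferentiableAt.comp (g := F₃) (f := fun t : ℂ => (t / (z * t + 1), z))
      · apply dF3; simp
      · have : z * 0 + 1 ≠ 0 := by simp
        fun_prop (disch := assumption)
    · have : ∀ᶠ t in nhds (0 : ℂ), z * t + 1 ≠ 0 :=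
        ContinuousAt.eventually_ne (by fun_prop) (by simp)
      filter_upwards [this] with t ht
      by_cases h0 : t = 0
      · simp [H, h0]
      · rw [H0 z t h0, e3]
        · congr 2; field_simp
        · exact div_ne_zero h0 ht
        · intro h
          rw [div_mul_eq_mul_div, div_eq_one_iff_eq ht] at h
          have : (1 : ℂ) = 0 := by linear_combination -h
          exact one_ne_zero this
  have hinvn : ∀ (n : ℕ) (z w : ℂ), z ≠ w → F (z + n, w + n) = F (z, w) := by
    intro n
    induction n with
    | zero => intro z w _; simp
    | succ k ih =>
      intro z w hzw
      rw [← ih z w hzw, ← hinv (z + k) (w + k) (by simpa using hzw)]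
      push_cast
      simp only [add_assoc]
  have hGH : ∀ z, H z = G z := by
    intro z
    have aH : AnalyticOnNhd ℂ (H z) Set.univ := (dH z).differentiableOn.analyticOnNhd isOpen_univ
    have aG : AnalyticOnNhd ℂ (G z) Set.univ := (dG z).differentiableOn.analyticOnNhd isOpen_univ
    refine aH.eq_of_frequently_eq aG (z₀ := 0) ?_
    have ht : Filter.Tendsto (fun n : ℕ => ((n : ℂ) + 1)⁻¹) Filter.atTop (nhdsWithin 0 {0}ᶜ) := by
      refine tendsto_nhdsWithin_iff.2 ⟨?_, ?_⟩
      · simpa using tendsto_one_div_add_atTop_nhds_zero_nat (𝕜 := ℂ)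
      · refine Filter.Eventually.of_forall fun n => ?_
        simpa using Nat.cast_add_one_ne_zero (R := ℂ) n
    refine ht.frequently (Filter.Eventually.frequently (Filter.Eventually.of_forall fun n => ?_))
    have hn : (n : ℂ) + 1 ≠ 0 := Nat.cast_add_one_ne_zero n
    rw [H0 _ _ (inv_ne_zero hn), G0 _ _ (inv_ne_zero hn), inv_inv]
    have := hinvn (n + 1) z (z - (n + 1)) (by
      intro h; apply hn; linear_combination h)
    rw [← this]
    push_cast
    congr 2
    ring
  have hconst : ∀ z t : ℂ, t.im ≠ 0 → G z t = G 0 t := by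
    intro z t him
    have ht : t ≠ 0 := by rintro rfl; simp at him
    have hti : t⁻¹ ≠ 0 := inv_ne_zero ht
    refine aux_doubly_periodic (fun z => G z t) ?_ t⁻¹ ?_ ?_ ?_ z 0
    · have : (fun z => G z t) = fun z => F (z, z - t⁻¹) := funext fun z => G0 z t ht
      rw [this]
      intro x
      apply DifferentiableAt.comp (g := F) (f := fun x : ℂ => (x, x - t⁻¹))
      · apply dF
        intro h
        apply hti
        linear_combination h
      · fun_prop
    · rw [Complex.inv_im]
      exact div_ne_zero (neg_ne_zero.2 him) (by simpa using ht)
    · intro x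
      simp only [G0 _ t ht]
      rw [← hinv x (x - t⁻¹) (by intro h; apply hti; linear_combination h)]
      congr 2
      ring
    · intro x
      change G (x + t⁻¹) t = G x t
      rw [← hGH x, G0 _ t ht, H0 _ t ht]
      simp
  have hall : ∀ z, G z = G 0 := by
    intro z
    have hd : Dense {t : ℂ | t.im ≠ 0} := by
      have := (dense_compl_singleton (0 : ℝ)).preimage Complex.isOpenMap_im
      exact this
    exact Continuous.ext_on hd (dG z).continuous (dG 0).continuous fun t ht => hconst z t ht
  refine ⟨G 0, dG 0, fun z w hzw => ?_⟩
  have h : z - w ≠ 0 := sub_ne_zero.2 hzw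
  rw [← hall z, G0 _ _ (one_div_ne_zero h)]
  simp

/-- Theorem 4.3: a holomorphic function on `G` is invariant under
`(z,w) ↦ (z + 1, w + 1)` iff it has the form `g (1 / (z - w))`
for some entire function `g`. -/
theorem invariant_parabolic_iff (F : ℂ × ℂ → ℂ) (hF : DefinesHolomorphicOnG F) :
    (∀ z w : ℂ, z ≠ w → F (z + 1, w + 1) = F (z, w)) ↔
    (∃ g : ℂ → ℂ, Differentiable ℂ g ∧
      ∀ z w : ℂ, z ≠ w → F (z, w) = g (1 / (z - w))) := by
  constructor
  · exact aux_main F hF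
  · rintro ⟨g, -, hg⟩ z w hzw
    rw [hg z w hzw, hg (z + 1) (w + 1) (by simpa using hzw)]
    congr 2
    ring
end
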